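/- Let p be an odd prime, n ≥ 1, and let A_h = A(𝔽_p[[h]]) be the Rees reduced Weyl algebra over the power series ring 𝔽_p[[h]] with its distinguished element h. Then every 𝔽_p[[h]]-linear derivation D : A_h → A_h becomes inner after multiplication by h: there exists a ∈ A_h such that h·D(m) = a·m − m·a for all m ∈ A_h. -/

import Mathlib

noncomputable section

/-- The defining relations of the Rees reduced Weyl algebra `A(R)` (with parameter `h ∈ R`):
the `x_i` (indexed by `Sum.inl i`) commute, the `y_j` (indexed by `Sum.inr j`) commute,
`y_j x_i = x_i y_j + δ_{ij}·h`, and `x_i^p = y_j^p = 0`. -/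
inductive ReesWeylRel (p n : ℕ) (R : Type) [CommRing R] (h : R) :
    FreeAlgebra R (Fin n ⊕ Fin n) → FreeAlgebra R (Fin n ⊕ Fin n) → Prop
  | xx (i j : Fin n) :
      ReesWeylRel p n R h (FreeAlgebra.ι R (Sum.inl i) * FreeAlgebra.ι R (Sum.inl j))
        (FreeAlgebra.ι R (Sum.inl j) * FreeAlgebra.ι R (Sum.inl i))
  | yy (i j : Fin n) :
      ReesWeylRel p n R h (FreeAlgebra.ι R (Sum.inr i) * FreeAlgebra.ι R (Sum.inr j))
        (FreeAlgebra.ι R (Sum.inr j) * FreeAlgebra.ι R (Sum.inr i))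
  | yx (i j : Fin n) :
      ReesWeylRel p n R h (FreeAlgebra.ι R (Sum.inr j) * FreeAlgebra.ι R (Sum.inl i))
        (FreeAlgebra.ι R (Sum.inl i) * FreeAlgebra.ι R (Sum.inr j) +
          if i = j then algebraMap R (FreeAlgebra R (Fin n ⊕ Fin n)) h else 0)
  | xp (i : Fin n) : ReesWeylRel p n R h (FreeAlgebra.ι R (Sum.inl i) ^ p) 0
  | yp (j : Fin n) : ReesWeylRel p n R h (FreeAlgebra.ι R (Sum.inr j) ^ p) 0

/-- The Rees reduced Weyl algebra `A(R)` on `2n` generators with parameter `h ∈ R`. -/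
abbrev ReesWeyl (p n : ℕ) (R : Type) [CommRing R] (h : R) : Type :=
  RingQuot (ReesWeylRel p n R h)

/-- The generator `x_i` of the Rees reduced Weyl algebra. -/
def reesX (p n : ℕ) (R : Type) [CommRing R] (h : R) (i : Fin n) : ReesWeyl p n R h :=
  RingQuot.mkAlgHom R (ReesWeylRel p n R h) (FreeAlgebra.ι R (Sum.inl i))

/-- The generator `y_j` of the Rees reduced Weyl algebra. -/
def reesY (p n : ℕ) (R : Type) [CommRing R] (h : R) (j : Fin n) : ReesWeyl p n R h :=
  RingQuot.mkAlgHom R (ReesWeylRel p n R h) (FreeAlgebra.ι R (Sum.inr j))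

/-!
Let `V = R[z_k]/(z_k ^ p)`. Normal ordering is a linear isomorphism `ψ` from `V` onto the Rees
reduced Weyl algebra `A`; it is injective because `A` acts on `V`, with `x_i` multiplying by `X_i`
and `y_j` acting as `Y_j + h ∂/∂X_j`. Under `ψ` the commutator with the generator `c_k` conjugate
to `z_k` becomes `h ∂_k`. Finding `a` with `⁅a, c_k⁆ = h D(c_k)` for all `k` therefore means solving
`∂_k v = ψ⁻¹(D c_k)` and taking `a = -ψ v`. The Poincaré lemma for truncated polynomials needs
closedness of the right-hand side, which holds because `D` kills the scalars `⁅c_k, c_l⁆`, and the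
vanishing of its `∂_k ^ (p - 1)`, which comes from `D(c_k ^ p) = 0` and the characteristic `p`
identity `(λ - ρ) ^ (p - 1) = ∑ λ ^ i ρ ^ (p - 1 - i)`, where `λ` and `ρ` are left and right
multiplication by `c_k`.
-/

section Algebra

variable {R A : Type*} [CommRing R] [Ring A] [Algebra R A]

theorem submodule_eq_top_of_mul_mem {s : Set A} (hs : Algebra.adjoin R s = ⊤) (S : Submodule R A)
    (one_mem : 1 ∈ S) (mul_mem : ∀ z ∈ s, ∀ a ∈ S, z * a ∈ S) : S = ⊤ := by
  rw [eq_top_iff, ← Algebra.top_toSubmodule, ← hs, Algebra.adjoin_eq_span, Submodule.span_le]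
  intro a ha
  induction ha using Submonoid.closure_induction_left with
  | one => exact one_mem
  | mul_left z hz a _ ih => exact mul_mem z hz a ih

theorem natCast_eq_zero_of_charP (R A : Type*) [CommRing R] [Ring A] [Algebra R A] (p : ℕ)
    [CharP R p] : (p : A) = 0 := by
  rw [← map_natCast (algebraMap R A), CharP.cast_eq_zero, map_zero]

open scoped IsMulCommutative in
/-- Evaluation of polynomials at a commuting family of elements of a possibly noncommutative
algebra. -/
def aevalOfCommute {σ : Type*} (z : σ → A) (hz : ∀ k l, Commute (z k) (z l)) :
    MvPolynomial σ R →ₐ[R] A :=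
  have : IsMulCommutative (Algebra.adjoin R (Set.range z)) :=
    Algebra.isMulCommutative_adjoin R <| by rintro _ ⟨k, rfl⟩ _ ⟨l, rfl⟩; exact hz k l
  (Algebra.adjoin R (Set.range z)).val.comp
    (MvPolynomial.aeval fun k => ⟨z k, Algebra.subset_adjoin ⟨k, rfl⟩⟩)

@[simp]
theorem aevalOfCommute_X {σ : Type*} (z : σ → A) (hz : ∀ k l, Commute (z k) (z l)) (k : σ) :
    aevalOfCommute (R := R) z hz (MvPolynomial.X k) = z k := by
  simp [aevalOfCommute]

theorem eq_zero_of_leibniz_of_adjoin_eq_top {s : Set A} (hs : Algebra.adjoin R s = ⊤)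
    {D : A →ₗ[R] A} (hD : ∀ a b, D (a * b) = D a * b + a * D b) (hDs : ∀ z ∈ s, D z = 0) :
    D = 0 := by
  rw [← LinearMap.ker_eq_top]
  refine submodule_eq_top_of_mul_mem hs _ (by simpa using hD 1 1) fun z hz a ha => ?_
  rw [LinearMap.mem_ker] at ha ⊢
  rw [hD, hDs z hz, ha, zero_mul, mul_zero, add_zero]

theorem apply_pow_of_leibniz {D : A → A} (hD : ∀ a b, D (a * b) = D a * b + a * D b) (c : A)
    (m : ℕ) :
    D (c ^ (m + 1)) = ∑ i ∈ Finset.range (m + 1), c ^ i * D c * c ^ (m - i) := by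
  induction m with
  | zero => simp
  | succ m ih =>
    rw [pow_succ, hD, ih, Finset.sum_range_succ _ (m + 1), Finset.sum_mul, Nat.sub_self,
      pow_zero, mul_one]
    congr 1
    refine Finset.sum_congr rfl fun i hi => ?_
    rw [mul_assoc, ← pow_succ, Nat.sub_add_comm (Finset.mem_range_succ_iff.mp hi)]

end Algebra

section CharP

variable {E : Type*} [Ring E] {p : ℕ}

theorem natCast_choose_pred_eq_neg_one_pow (hp : p.Prime) (hE : (p : E) = 0) :
    ∀ {i : ℕ}, i < p → ((p - 1).choose i : E) = (-1) ^ i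
  | 0, _ => by simp
  | i + 1, hi => by
    have pascal : (p - 1).choose i + (p - 1).choose (i + 1) = p.choose (i + 1) := by
      rw [← Nat.choose_succ_succ, Nat.succ_eq_add_one, Nat.sub_add_cancel hp.one_le]
    obtain ⟨q, hq⟩ := hp.dvd_choose_self i.succ_ne_zero hi
    have := congrArg (Nat.cast : ℕ → E) (pascal.trans hq)
    rw [Nat.cast_add, Nat.cast_mul, hE, zero_mul,
      natCast_choose_pred_eq_neg_one_pow hp hE (i.lt_succ_self.trans hi)] at this
    rw [pow_succ, mul_neg_one, eq_neg_of_add_eq_zero_right this]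

theorem sub_pow_pred_of_commute (hp : p.Prime) (hE : (p : E) = 0) {a b : E}
    (hab : Commute a b) :
    (a - b) ^ (p - 1) = ∑ i ∈ Finset.range p, a ^ i * b ^ (p - 1 - i) := by
  obtain ⟨m, rfl⟩ := Nat.exists_eq_succ_of_ne_zero hp.ne_zero
  rw [Nat.succ_eq_add_one, Nat.add_sub_cancel, sub_eq_add_neg, hab.neg_right.add_pow]
  refine Finset.sum_congr rfl fun i hi => ?_
  have hi := Finset.mem_range_succ_iff.mp hi
  have key := natCast_choose_pred_eq_neg_one_pow hp hE (i := m - i) (by omega)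
  rw [Nat.succ_sub_one, Nat.choose_symm hi] at key
  rw [key, mul_assoc, ← (Commute.neg_one_right (-b)).mul_pow, neg_mul_neg, mul_one]

end CharP

section Derivation

variable {R B : Type*} [CommRing R] [CommRing B] [Algebra R B]

theorem iterate_derivation_mul (D : Derivation R B B) {z : B} (hz : D (D z) = 0) (b : B) (m : ℕ) :
    D^[m + 1] (z * b) = z * D^[m + 1] b + (m + 1 : ℕ) * (D z * D^[m] b) := by
  induction m with
  | zero => simp [mul_comm]
  | succ m ih =>
    rw [Function.iterate_succ_apply', ih]
    simp only [map_add, Derivation.leibniz, smul_eq_mul, hz, Derivation.map_natCast,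
      ← Function.iterate_succ_apply' D]
    push_cast
    ring

theorem iterate_derivation_eq_zero {s : Set B} (hs : Algebra.adjoin R s = ⊤) (D : Derivation R B B)
    (hD : ∀ z ∈ s, D (D z) = 0) {m : ℕ} (hm : ((m + 1 : ℕ) : B) = 0) (b : B) :
    D^[m + 1] b = 0 := by
  have ker_eq_top : LinearMap.ker ((D : Module.End R B) ^ (m + 1)) = ⊤ := by
    refine submodule_eq_top_of_mul_mem hs _ ?_ fun z hz a ha => ?_
    · simp [pow_succ]
    · rw [LinearMap.mem_ker, Module.End.pow_apply, Derivation.coeFn_coe] at ha ⊢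
      rw [iterate_derivation_mul D (hD z hz), ha, hm, mul_zero, zero_mul, add_zero]
  simpa [Module.End.pow_apply] using LinearMap.congr_fun (LinearMap.ker_eq_top.mp ker_eq_top) b

/- Integration by parts, `(j + 1) z ^ j b = D (z ^ (j + 1) b) - z ^ (j + 1) D b`, repeated until the
iterated derivative of `b` vanishes. -/
theorem exists_antiderivative_pow_mul {ι : Type*} {D : Derivation R B B} {E : ι → Derivation R B B}
    (hDE : ∀ i b, E i (D b) = D (E i b)) {z : B} (hDz : D z = 1) (hEz : ∀ i, E i z = 0) {M : ℕ}
    (hM : ∀ j < M, IsUnit ((j + 1 : ℕ) : R)) (N : ℕ) :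
    ∀ {j : ℕ} {b : B}, j + N ≤ M → (∀ i, E i b = 0) → D^[N] b = 0 →
      ∃ a, D a = z ^ j * b ∧ ∀ i, E i a = 0 := by
  induction N with
  | zero =>
    intro j b _ _ hb
    exact ⟨0, by simp [show b = 0 from hb], by simp⟩
  | succ N ih =>
    intro j b hj hEb hb
    obtain ⟨c, hc⟩ := (hM j (by omega)).exists_left_inv
    obtain ⟨a, hDa, hEa⟩ := ih (j := j + 1) (b := D b) (by omega)
      (fun i => by rw [hDE, hEb, map_zero]) hb
    refine ⟨c • (z ^ (j + 1) * b - a), ?_, fun i => ?_⟩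
    · have hc' : c • (((j + 1 : ℕ) : B) * (z ^ j * b)) = z ^ j * b := by
        rw [← map_natCast (algebraMap R B), ← Algebra.smul_def, smul_smul, hc, one_smul]
      rw [D.map_smul, map_sub, D.leibniz, D.leibniz_pow, hDa, hDz]
      simpa [mul_comm, mul_left_comm, mul_assoc] using hc'
    · simp [E i |>.leibniz_pow, hEz, hEb, hEa]

theorem exists_antiderivative {σ : Type*} [Finite σ] {D : σ → Derivation R B B} {z : σ → B}
    (hcomm : ∀ k l b, D k (D l b) = D l (D k b)) (hself : ∀ k, D k (z k) = 1)
    (hne : ∀ k l, k ≠ l → D k (z l) = 0) {M : ℕ} (hM : ∀ j < M, IsUnit ((j + 1 : ℕ) : R))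
    (hnil : ∀ k b, (D k)^[M + 1] b = 0) {w : σ → B} (hclosed : ∀ k l, D k (w l) = D l (w k))
    (hw : ∀ k, (D k)^[M] (w k) = 0) : ∃ a, ∀ k, D k a = w k := by
  classical
  have := Fintype.ofFinite σ
  suffices ∀ s : Finset σ, ∃ a, ∀ k ∈ s, D k a = w k by simpa using this Finset.univ
  intro s
  induction s using Finset.induction_on with
  | empty => exact ⟨0, by simp⟩
  | insert k s hk ih =>
    obtain ⟨a, ha⟩ := ih
    have residual_const (l : s) : D l (w k - D k a) = 0 := by
      rw [map_sub, hcomm, ha l l.2, hclosed, sub_self]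
    have residual_nil : (D k)^[M] (w k - D k a) = 0 := by
      rw [iterate_map_sub, hw, ← Function.iterate_succ_apply, hnil, sub_zero]
    obtain ⟨b, hb, hconst⟩ := exists_antiderivative_pow_mul (fun l : s => hcomm l k) (hself k)
      (fun l : s => hne l k (ne_of_mem_of_not_mem l.2 hk)) hM M (zero_add M).le
      residual_const residual_nil
    refine ⟨a + b, fun l hl => ?_⟩
    obtain rfl | hl := Finset.mem_insert.mp hl
    · rw [map_add, hb, pow_zero, one_mul, add_sub_cancel]
    · rw [map_add, ha l hl, hconst ⟨l, hl⟩, add_zero]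

end Derivation

section TruncatedPolynomial

variable (σ R : Type*) [CommRing R] (p : ℕ)

/-- The ideal generated by the `p`-th powers of the variables. -/
def truncationIdeal : Ideal (MvPolynomial σ R) :=
  Ideal.span (Set.range fun k => MvPolynomial.X k ^ p)

/-- The truncated polynomial ring `R[z_k]/(z_k ^ p)`. -/
abbrev TruncatedPolynomial : Type _ :=
  MvPolynomial σ R ⧸ truncationIdeal σ R p

end TruncatedPolynomial

namespace TruncatedPolynomial

variable {σ R : Type*} [CommRing R] {p : ℕ}

/-- The class of the variable `z_k`. -/
def X (k : σ) : TruncatedPolynomial σ R p :=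
  Ideal.Quotient.mkₐ R _ (MvPolynomial.X k)

theorem X_pow (k : σ) : (X k : TruncatedPolynomial σ R p) ^ p = 0 := by
  rw [X, ← map_pow]
  exact Ideal.Quotient.eq_zero_iff_mem.mpr (Ideal.subset_span ⟨k, rfl⟩)

theorem adjoin_range_X :
    Algebra.adjoin R (Set.range (X : σ → TruncatedPolynomial σ R p)) = ⊤ := by
  rw [show (X : σ → TruncatedPolynomial σ R p) = Ideal.Quotient.mkₐ R _ ∘ MvPolynomial.X from rfl,
    Set.range_comp, ← AlgHom.map_adjoin, MvPolynomial.adjoin_range_X, Algebra.map_top,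
    AlgHom.range_eq_top]
  exact Ideal.Quotient.mkₐ_surjective R _

theorem isSMulRegular {r : R} (hr : IsSMulRegular R r) :
    IsSMulRegular (TruncatedPolynomial σ R p) r := by
  have span_eq : truncationIdeal σ R p = Ideal.span
      ((fun s => MvPolynomial.monomial s 1) '' Set.range fun k => Finsupp.single k p) := by
    rw [truncationIdeal, ← Set.range_comp]
    simp only [MvPolynomial.X_pow_eq_monomial, Function.comp_def]
  rw [isSMulRegular_iff_right_eq_zero_of_smul]
  intro v hv
  obtain ⟨f, rfl⟩ := Ideal.Quotient.mkₐ_surjective R _ v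
  rw [← map_smul, Ideal.Quotient.mkₐ_eq_mk, Ideal.Quotient.eq_zero_iff_mem, span_eq,
    MvPolynomial.mem_ideal_span_monomial_image] at hv
  rw [Ideal.Quotient.mkₐ_eq_mk, Ideal.Quotient.eq_zero_iff_mem, span_eq,
    MvPolynomial.mem_ideal_span_monomial_image]
  intro s hs
  refine hv s ?_
  rw [MvPolynomial.mem_support_iff] at hs ⊢
  exact fun h => hs (hr.right_eq_zero_of_smul h)

/-- The universal property of truncated polynomials: evaluation at a commuting family with vanishing
`p`-th powers, in a possibly noncommutative algebra. -/
def lift {A : Type*} [Ring A] [Algebra R A] (z : σ → A) (hz : ∀ k l, Commute (z k) (z l))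
    (hzp : ∀ k, z k ^ p = 0) : TruncatedPolynomial σ R p →ₐ[R] A :=
  Ideal.Quotient.liftₐ _ (aevalOfCommute z hz) <| by
    suffices truncationIdeal σ R p ≤ RingHom.ker (aevalOfCommute z hz) from fun _ hf => this hf
    rw [truncationIdeal, Ideal.span_le]
    rintro _ ⟨k, rfl⟩
    rw [SetLike.mem_coe, RingHom.mem_ker, map_pow, aevalOfCommute_X, hzp]

theorem lift_X {A : Type*} [Ring A] [Algebra R A] (z : σ → A) (hz : ∀ k l, Commute (z k) (z l))
    (hzp : ∀ k, z k ^ p = 0) (k : σ) : lift z hz hzp (X k : TruncatedPolynomial σ R p) = z k :=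
  aevalOfCommute_X z hz k

theorem mulLeft_X_commute_mulLeft_X (k l : σ) :
    Commute (LinearMap.mulLeft R (X k : TruncatedPolynomial σ R p))
      (LinearMap.mulLeft R (X l)) := by
  refine LinearMap.ext fun v => ?_
  simp [mul_left_comm]

variable [CharP R p]

theorem pderiv_mem_truncationIdeal (k : σ) {f : MvPolynomial σ R}
    (hf : f ∈ truncationIdeal σ R p) : MvPolynomial.pderiv k f ∈ truncationIdeal σ R p := by
  induction hf using Submodule.span_induction with
  | mem f hf =>
    obtain ⟨l, rfl⟩ := hf
    simp [Derivation.leibniz_pow]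
  | zero => simp
  | add f g _ _ hf hg => rw [map_add]; exact add_mem hf hg
  | smul a f hf ih =>
    rw [smul_eq_mul, Derivation.leibniz]
    exact add_mem (Ideal.mul_mem_left _ _ ih) (Ideal.mul_mem_right _ _ hf)

/-- The partial derivative `∂/∂z_k`, which preserves the truncation ideal because `p = 0` in
`R`. -/
def pderiv (k : σ) : Derivation R (TruncatedPolynomial σ R p) (TruncatedPolynomial σ R p) :=
  Derivation.liftOfSurjective (Ideal.Quotient.mkₐ_surjective R (truncationIdeal σ R p))
    (d := MvPolynomial.pderiv k) fun f hf => by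
      rw [Ideal.Quotient.mkₐ_eq_mk, Ideal.Quotient.eq_zero_iff_mem] at hf ⊢
      exact pderiv_mem_truncationIdeal k hf

theorem pderiv_mk (k : σ) (f : MvPolynomial σ R) :
    pderiv k (Ideal.Quotient.mkₐ R (truncationIdeal σ R p) f) =
      Ideal.Quotient.mkₐ R _ (MvPolynomial.pderiv k f) := by
  rw [pderiv, Derivation.liftOfSurjective_apply]

theorem pderiv_X_self (k : σ) : pderiv k (X k : TruncatedPolynomial σ R p) = 1 := by
  rw [X, pderiv_mk, MvPolynomial.pderiv_X_self, map_one]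

theorem pderiv_X_of_ne {k l : σ} (h : k ≠ l) : pderiv k (X l : TruncatedPolynomial σ R p) = 0 := by
  rw [X, pderiv_mk, MvPolynomial.pderiv_X_of_ne h.symm, map_zero]

theorem pderiv_X [DecidableEq σ] (k l : σ) :
    pderiv k (X l : TruncatedPolynomial σ R p) = if k = l then 1 else 0 := by
  split_ifs with h
  · exact h ▸ pderiv_X_self k
  · exact pderiv_X_of_ne h

theorem pderiv_pderiv_X (k l m : σ) :
    pderiv k (pderiv l (X m : TruncatedPolynomial σ R p)) = 0 := by
  obtain rfl | h := eq_or_ne l m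
  · rw [pderiv_X_self, Derivation.map_one_eq_zero]
  · rw [pderiv_X_of_ne h, map_zero]

theorem pderiv_comm (k l : σ) (v : TruncatedPolynomial σ R p) :
    pderiv k (pderiv l v) = pderiv l (pderiv k v) := by
  have : ⁅pderiv (R := R) (p := p) k, pderiv (R := R) (p := p) l⁆ = 0 := by
    refine Derivation.ext_of_adjoin_eq_top _ adjoin_range_X ?_
    rintro _ ⟨m, rfl⟩
    simp [Derivation.commutator_apply, pderiv_pderiv_X]
  exact sub_eq_zero.mp (Derivation.congr_fun this v)

theorem iterate_pderiv_eq_zero (hp : p ≠ 0) (k : σ) (v : TruncatedPolynomial σ R p) :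
    (pderiv k)^[p] v = 0 := by
  obtain ⟨m, rfl⟩ := Nat.exists_eq_succ_of_ne_zero hp
  refine iterate_derivation_eq_zero adjoin_range_X (pderiv k) ?_
    (natCast_eq_zero_of_charP R _ (m + 1)) v
  rintro _ ⟨l, rfl⟩
  exact pderiv_pderiv_X k k l

theorem pderiv_toLinearMap_pow (hp : p ≠ 0) (k : σ) :
    (pderiv (R := R) (p := p) k).toLinearMap ^ p = 0 :=
  LinearMap.ext fun v => by
    rw [Module.End.pow_apply]
    exact iterate_pderiv_eq_zero hp k v

theorem exists_forall_pderiv_eq [Finite σ] (hp : p.Prime) {w : σ → TruncatedPolynomial σ R p}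
    (hclosed : ∀ k l, pderiv k (w l) = pderiv l (w k)) (hw : ∀ k, (pderiv k)^[p - 1] (w k) = 0) :
    ∃ v, ∀ k, pderiv k v = w k := by
  refine exists_antiderivative pderiv_comm pderiv_X_self (fun k l => pderiv_X_of_ne) (M := p - 1)
    (fun j hj => ?_) (fun k v => ?_) hclosed hw
  · exact (CharP.isUnit_natCast_iff hp).mpr (Nat.not_dvd_of_pos_of_lt j.succ_pos (by omega))
  · rw [Nat.sub_add_cancel hp.one_le, iterate_pderiv_eq_zero hp.ne_zero]

theorem mulLeft_X_commute_pderiv {k l : σ} (hkl : k ≠ l) :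
    Commute (.mulLeft R (X k : TruncatedPolynomial σ R p)) (pderiv l).toLinearMap := by
  refine LinearMap.ext fun v => ?_
  simp [pderiv_X_of_ne hkl.symm]

end TruncatedPolynomial

section Lie

attribute [local instance] LieRing.ofAssociativeRing

variable {R A : Type*} [CommRing R] [Ring A] [Algebra R A]

theorem ad_pow_pred_apply_of_leibniz {p : ℕ} [CharP R p] (hp : p.Prime) {D : A → A}
    (hD : ∀ a b, D (a * b) = D a * b + a * D b) (c : A) :
    (LieAlgebra.ad R A c ^ (p - 1)) (D c) = D (c ^ p) := by
  have hcomm := LinearMap.commute_mulLeft_right (R := R) c c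
  rw [LieAlgebra.ad_eq_lmul_left_sub_lmul_right, Pi.sub_apply,
    sub_pow_pred_of_commute hp (natCast_eq_zero_of_charP R _ p) hcomm]
  have := apply_pow_of_leibniz hD c (p - 1)
  rw [Nat.sub_add_cancel hp.one_le] at this
  simp [this, LinearMap.sum_apply, LinearMap.pow_mulLeft, LinearMap.pow_mulRight, mul_assoc]

variable {ι : Type*}

/-- The generator conjugate to `z k`: up to sign, this exchanges `x_i = z (.inl i)` and
`y_i = z (.inr i)`, the sign being the one for which `⁅conjugateGen z k, z k⁆ = h`. -/
def conjugateGen (z : ι ⊕ ι → A) : ι ⊕ ι → A :=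
  Sum.elim (fun i => z (.inr i)) (fun i => -z (.inl i))

theorem adjoin_range_conjugateGen {z : ι ⊕ ι → A} (hgen : Algebra.adjoin R (Set.range z) = ⊤) :
    Algebra.adjoin R (Set.range (conjugateGen z)) = ⊤ := by
  rw [eq_top_iff, ← hgen, Algebra.adjoin_le_iff]
  rintro _ ⟨i | i, rfl⟩
  · rw [← neg_neg (z _)]
    exact neg_mem (Algebra.subset_adjoin ⟨.inr i, rfl⟩)
  · exact Algebra.subset_adjoin ⟨.inl i, rfl⟩

/-- Multiplication by `z k` on the side that preserves normal ordering: `x_i` acts on the left and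
`y_j` on the right. -/
def normalMul (R : Type*) [CommRing R] [Algebra R A] (z : ι ⊕ ι → A) :
    ι ⊕ ι → Module.End R A :=
  Sum.elim (fun i => .mulLeft R (z (.inl i))) (fun j => .mulRight R (z (.inr j)))

/-- The defining relations of the Rees reduced Weyl algebra with parameter `h`, for a family
`z` consisting of the `x_i = z (.inl i)` and the `y_j = z (.inr j)`. -/
structure IsReesWeylFamily [DecidableEq ι] (p : ℕ) (h : R) (z : ι ⊕ ι → A) : Prop where
  inl_commute (i j : ι) : Commute (z (.inl i)) (z (.inl j))
  inr_commute (i j : ι) : Commute (z (.inr i)) (z (.inr j))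
  inr_mul_inl (i j : ι) : z (.inr j) * z (.inl i) =
    z (.inl i) * z (.inr j) + if i = j then algebraMap R A h else 0
  pow_eq_zero (k : ι ⊕ ι) : z k ^ p = 0

namespace IsReesWeylFamily

variable [DecidableEq ι] {p : ℕ} {h : R} {z : ι ⊕ ι → A} (hz : IsReesWeylFamily p h z)

include hz

theorem conjugateGen_pow (k : ι ⊕ ι) : conjugateGen z k ^ p = 0 := by
  cases k with
  | inl i => exact hz.pow_eq_zero (.inr i)
  | inr i => rw [conjugateGen, Sum.elim_inr, neg_pow, hz.pow_eq_zero, mul_zero]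

theorem lie_conjugateGen (k l : ι ⊕ ι) :
    ⁅conjugateGen z k, z l⁆ = if k = l then algebraMap R A h else 0 := by
  rcases k with i | i <;> rcases l with j | j <;>
    simp only [conjugateGen, Sum.elim_inl, Sum.elim_inr, Ring.lie_def]
  · simp [hz.inr_mul_inl, eq_comm]
  · simp [(hz.inr_commute i j).eq]
  · simp [(hz.inl_commute i j).eq]
  · simp [hz.inr_mul_inl]

theorem exists_lie_conjugateGen_conjugateGen_eq_algebraMap (k l : ι ⊕ ι) :
    ∃ r : R, ⁅conjugateGen z k, conjugateGen z l⁆ = algebraMap R A r := by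
  obtain i | i := l
  · exact ⟨if k = .inr i then h else 0,
      (hz.lie_conjugateGen k (.inr i)).trans (by split_ifs <;> simp)⟩
  · refine ⟨-if k = .inl i then h else 0, ?_⟩
    rw [show conjugateGen z (.inr i) = -z (.inl i) from rfl, lie_neg, hz.lie_conjugateGen]
    split_ifs <;> simp

theorem normalMul_commute (k l : ι ⊕ ι) : Commute (normalMul R z k) (normalMul R z l) := by
  rcases k with i | i <;> rcases l with j | j
  · refine LinearMap.ext fun a => ?_
    simp [normalMul, ← mul_assoc, (hz.inl_commute i j).eq]
  · exact LinearMap.commute_mulLeft_right _ _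
  · exact (LinearMap.commute_mulLeft_right _ _).symm
  · refine LinearMap.ext fun a => ?_
    simp [normalMul, mul_assoc, (hz.inr_commute i j).eq]

theorem normalMul_pow (k : ι ⊕ ι) : normalMul R z k ^ p = 0 := by
  obtain i | j := k
  · rw [normalMul, Sum.elim_inl, LinearMap.pow_mulLeft, hz.pow_eq_zero,
      LinearMap.mulLeft_zero_eq_zero]
  · rw [normalMul, Sum.elim_inr, LinearMap.pow_mulRight, hz.pow_eq_zero,
      LinearMap.mulRight_zero_eq_zero]

theorem lie_conjugateGen_normalMul (k l : ι ⊕ ι) (a : A) :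
    ⁅conjugateGen z k, normalMul R z l a⁆ =
      normalMul R z l ⁅conjugateGen z k, a⁆ + if k = l then h • a else 0 := by
  have smul_eq_lie_mul : (if k = l then h • a else 0) = ⁅conjugateGen z k, z l⁆ * a := by
    rw [hz.lie_conjugateGen, ite_mul, zero_mul, Algebra.smul_def]
  have smul_eq_mul_lie : (if k = l then h • a else 0) = a * ⁅conjugateGen z k, z l⁆ := by
    rw [hz.lie_conjugateGen, mul_ite, mul_zero, Algebra.smul_def, Algebra.commutes]
  obtain j | j := l
  · rw [smul_eq_lie_mul]
    simp only [normalMul, Sum.elim_inl, LinearMap.mulLeft_apply, Ring.lie_def]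
    noncomm_ring
  · rw [smul_eq_mul_lie]
    simp only [normalMul, Sum.elim_inr, LinearMap.mulRight_apply, Ring.lie_def]
    noncomm_ring

/-- Normal ordering with respect to the family `z`: the linear map sending a monomial `x^α y^β` of
the commutative truncated polynomial ring to the product `x^α y^β` in `A`. -/
def normalOrder : TruncatedPolynomial (ι ⊕ ι) R p →ₗ[R] A :=
  LinearMap.applyₗ 1 ∘ₗ
    (TruncatedPolynomial.lift _ hz.normalMul_commute hz.normalMul_pow).toLinearMap

theorem normalOrder_one : hz.normalOrder 1 = 1 := by
  simp [normalOrder]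

theorem normalOrder_X_mul (k : ι ⊕ ι) (v : TruncatedPolynomial (ι ⊕ ι) R p) :
    hz.normalOrder (.X k * v) = normalMul R z k (hz.normalOrder v) := by
  simp [normalOrder, TruncatedPolynomial.lift_X]

variable [CharP R p]

open TruncatedPolynomial

theorem lie_conjugateGen_normalOrder (k : ι ⊕ ι) (v : TruncatedPolynomial (ι ⊕ ι) R p) :
    ⁅conjugateGen z k, hz.normalOrder v⁆ = h • hz.normalOrder (pderiv k v) := by
  let S := LinearMap.eqLocus (LieAlgebra.ad R A (conjugateGen z k) ∘ₗ hz.normalOrder)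
    (h • hz.normalOrder ∘ₗ (pderiv k).toLinearMap)
  suffices S = ⊤ from LinearMap.congr_fun (LinearMap.eqLocus_eq_top.mp this) v
  refine submodule_eq_top_of_mul_mem adjoin_range_X S ?_ ?_
  · change ⁅conjugateGen z k, hz.normalOrder 1⁆ = h • hz.normalOrder (pderiv k 1)
    simp [normalOrder_one, Ring.lie_def]
  · rintro _ ⟨l, rfl⟩ v hv
    change ⁅conjugateGen z k, hz.normalOrder v⁆ = h • hz.normalOrder (pderiv k v) at hv
    change ⁅conjugateGen z k, hz.normalOrder (X l * v)⁆ = h • hz.normalOrder (pderiv k (X l * v))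
    rw [normalOrder_X_mul, lie_conjugateGen_normalMul hz, hv, Derivation.leibniz, pderiv_X,
      smul_eq_mul, map_add, normalOrder_X_mul, map_smul, smul_add]
    split_ifs <;> simp

theorem ad_conjugateGen_pow_normalOrder (k : ι ⊕ ι) (m : ℕ) (v : TruncatedPolynomial (ι ⊕ ι) R p) :
    (LieAlgebra.ad R A (conjugateGen z k) ^ m) (hz.normalOrder v) =
      h ^ m • hz.normalOrder ((pderiv k)^[m] v) := by
  induction m with
  | zero => simp
  | succ m ih =>
    rw [pow_succ', Module.End.mul_apply, ih, map_smul, LieAlgebra.ad_apply,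
      lie_conjugateGen_normalOrder, smul_smul, ← pow_succ, Function.iterate_succ_apply']

theorem normalOrder_surjective (hgen : Algebra.adjoin R (Set.range z) = ⊤) :
    Function.Surjective hz.normalOrder := by
  rw [← LinearMap.range_eq_top]
  refine submodule_eq_top_of_mul_mem hgen _ ⟨1, hz.normalOrder_one⟩ ?_
  rintro _ ⟨i | j, rfl⟩ _ ⟨v, rfl⟩
  · exact ⟨X (.inl i) * v, hz.normalOrder_X_mul _ _⟩
  · refine ⟨X (.inr j) * v + h • pderiv (.inl j) v, ?_⟩
    rw [map_add, map_smul, normalOrder_X_mul, ← lie_conjugateGen_normalOrder]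
    exact add_sub_cancel _ _

theorem exists_lie_conjugateGen_eq [Finite ι] (hp : p.Prime) (hh : IsSMulRegular R h)
    (hgen : Algebra.adjoin R (Set.range z) = ⊤) (hinj : Function.Injective hz.normalOrder)
    {D : A →ₗ[R] A} (hD : ∀ a b, D (a * b) = D a * b + a * D b) :
    ∃ a : A, ∀ k, ⁅a, conjugateGen z k⁆ = h • D (conjugateGen z k) := by
  choose w hw using fun k => hz.normalOrder_surjective hgen (D (conjugateGen z k))
  have smul_normalOrder_injective (m : ℕ) :
      Function.Injective fun v => h ^ m • hz.normalOrder v := by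
    simp_rw [← map_smul]
    exact hinj.comp (TruncatedPolynomial.isSMulRegular (hh.pow m))
  have closed (k l) : pderiv k (w l) = pderiv l (w k) := by
    obtain ⟨r, hr⟩ := hz.exists_lie_conjugateGen_conjugateGen_eq_algebraMap k l
    have D_lie : D ⁅conjugateGen z k, conjugateGen z l⁆ = 0 := by
      rw [hr, Algebra.algebraMap_eq_smul_one, map_smul, show D 1 = 0 by simpa using hD 1 1,
        smul_zero]
    refine smul_normalOrder_injective 1 ?_
    simp only [pow_one, ← lie_conjugateGen_normalOrder, hw]
    rw [← sub_eq_zero, ← D_lie]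
    simp only [Ring.lie_def, map_sub, hD]
    abel
  have iterate_eq_zero (k) : (pderiv k)^[p - 1] (w k) = 0 := by
    refine smul_normalOrder_injective (p - 1) ?_
    simp only [← ad_conjugateGen_pow_normalOrder, hw, ad_pow_pred_apply_of_leibniz hp hD,
      hz.conjugateGen_pow, map_zero, smul_zero]
  obtain ⟨v, hv⟩ := exists_forall_pderiv_eq hp closed iterate_eq_zero
  exact ⟨-hz.normalOrder v, fun k => by
    rw [neg_lie, lie_skew, lie_conjugateGen_normalOrder, hv, hw]⟩

theorem exists_smul_eq_commutator [Finite ι] (hp : p.Prime) (hh : IsSMulRegular R h)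
    (hgen : Algebra.adjoin R (Set.range z) = ⊤) (hinj : Function.Injective hz.normalOrder)
    {D : A →ₗ[R] A} (hD : ∀ a b, D (a * b) = D a * b + a * D b) :
    ∃ a, ∀ m, h • D m = a * m - m * a := by
  obtain ⟨a, ha⟩ := hz.exists_lie_conjugateGen_eq hp hh hgen hinj hD
  have difference_eq_zero : h • D - LieAlgebra.ad R A a = 0 := by
    refine eq_zero_of_leibniz_of_adjoin_eq_top (adjoin_range_conjugateGen hgen) (fun m m' => ?_) ?_
    · simp only [LinearMap.sub_apply, LinearMap.smul_apply, hD, LieAlgebra.ad_apply, Ring.lie_def,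
        smul_add, sub_mul, mul_sub, smul_mul_assoc, mul_smul_comm]
      noncomm_ring
    · rintro _ ⟨k, rfl⟩
      rw [LinearMap.sub_apply, LinearMap.smul_apply, ← ha, LieAlgebra.ad_apply, sub_self]
  exact ⟨a, fun m => sub_eq_zero.mp (LinearMap.congr_fun difference_eq_zero m)⟩

end IsReesWeylFamily

end Lie

namespace ReesWeyl

variable {p n : ℕ} {R : Type} [CommRing R] {h : R}

/-- All generators of the Rees reduced Weyl algebra, indexed as in `ReesWeylRel`. -/
def gen (p n : ℕ) (R : Type) [CommRing R] (h : R) (k : Fin n ⊕ Fin n) : ReesWeyl p n R h :=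
  RingQuot.mkAlgHom R _ (FreeAlgebra.ι R k)

theorem isReesWeylFamily_gen : IsReesWeylFamily p h (gen p n R h) where
  inl_commute i j := by
    simpa [gen, Commute, SemiconjBy] using RingQuot.mkAlgHom_rel R (ReesWeylRel.xx i j)
  inr_commute i j := by
    simpa [gen, Commute, SemiconjBy] using RingQuot.mkAlgHom_rel R (ReesWeylRel.yy i j)
  inr_mul_inl i j := by
    simpa [gen, apply_ite] using RingQuot.mkAlgHom_rel R (ReesWeylRel.yx (p := p) (h := h) i j)
  pow_eq_zero k := by
    rw [gen, ← map_pow, ← map_zero (RingQuot.mkAlgHom R (ReesWeylRel p n R h))]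
    cases k with
    | inl i => exact RingQuot.mkAlgHom_rel R (.xp i)
    | inr j => exact RingQuot.mkAlgHom_rel R (.yp j)

theorem adjoin_range_gen : Algebra.adjoin R (Set.range (gen p n R h)) = ⊤ := by
  rw [show gen p n R h = RingQuot.mkAlgHom R (ReesWeylRel p n R h) ∘ FreeAlgebra.ι R from rfl,
    Set.range_comp, ← AlgHom.map_adjoin, FreeAlgebra.adjoin_range_ι, Algebra.map_top,
    AlgHom.range_eq_top]
  exact RingQuot.mkAlgHom_surjective R _

/-- The universal property of the Rees reduced Weyl algebra: a family satisfying the defining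
relations determines an algebra map. -/
def lift {E : Type*} [Ring E] [Algebra R E] {z : Fin n ⊕ Fin n → E}
    (hz : IsReesWeylFamily p h z) : ReesWeyl p n R h →ₐ[R] E :=
  RingQuot.liftAlgHom R ⟨FreeAlgebra.lift R z, fun _ _ hrel => by
    cases hrel with
    | xx i j => simpa using (hz.inl_commute i j).eq
    | yy i j => simpa using (hz.inr_commute i j).eq
    | yx i j => simpa [apply_ite] using hz.inr_mul_inl i j
    | xp i => simpa using hz.pow_eq_zero (.inl i)
    | yp j => simpa using hz.pow_eq_zero (.inr j)⟩

theorem lift_gen {E : Type*} [Ring E] [Algebra R E] {z : Fin n ⊕ Fin n → E}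
    (hz : IsReesWeylFamily p h z) (k : Fin n ⊕ Fin n) : lift hz (gen p n R h k) = z k := by
  simp [lift, gen]

end ReesWeyl

section PolynomialRepresentation

open TruncatedPolynomial

variable {R ι : Type*} [CommRing R] {p : ℕ} [CharP R p]

/-- The operators `X_i` and `Y_j + h ∂/∂X_j` by which the generators `x_i` and `y_j` of the Rees
reduced Weyl algebra act on truncated polynomials in `2n` variables. -/
def polynomialOperator (p : ℕ) [CharP R p] (h : R) :
    ι ⊕ ι → Module.End R (TruncatedPolynomial (ι ⊕ ι) R p) :=
  Sum.elim (fun i => .mulLeft R (X (.inl i)))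
    (fun j => .mulLeft R (X (.inr j)) + h • (pderiv (.inl j)).toLinearMap)

theorem polynomialOperator_commute_mulLeft_X_inr (h : R) (k : ι ⊕ ι) (j : ι) :
    Commute (polynomialOperator p h k) (.mulLeft R (X (.inr j))) := by
  obtain i | i := k
  · exact mulLeft_X_commute_mulLeft_X _ _
  · exact (mulLeft_X_commute_mulLeft_X _ _).add_left
      ((mulLeft_X_commute_pderiv Sum.inr_ne_inl).symm.smul_left h)

theorem isReesWeylFamily_polynomialOperator [DecidableEq ι] (hp : p.Prime) (h : R) :
    IsReesWeylFamily p h (polynomialOperator (ι := ι) p h) where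
  inl_commute i j := mulLeft_X_commute_mulLeft_X _ _
  inr_commute i j := by
    refine (polynomialOperator_commute_mulLeft_X_inr h _ j).add_right
      (.smul_right (.add_left ?_ (.smul_left ?_ h)) h)
    · exact mulLeft_X_commute_pderiv Sum.inr_ne_inl
    · exact LinearMap.ext (pderiv_comm _ _)
  inr_mul_inl i j := by
    refine LinearMap.ext fun v => ?_
    simp only [polynomialOperator, Sum.elim_inl, Sum.elim_inr, Module.End.mul_apply,
      LinearMap.mulLeft_apply, LinearMap.add_apply, LinearMap.smul_apply, Derivation.coeFn_coe,
      Derivation.leibniz, smul_eq_mul, mul_add, smul_add, mul_smul_comm, pderiv_X,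
      Sum.inl.injEq, eq_comm (a := j)]
    split_ifs
    · rw [mul_one, Module.algebraMap_end_apply]
      ring
    · rw [mul_zero, smul_zero, LinearMap.zero_apply]
      ring
  pow_eq_zero k := by
    obtain i | j := k
    · simp [polynomialOperator, LinearMap.pow_mulLeft, X_pow]
    · obtain ⟨r, hr⟩ := Commute.exists_add_pow_prime_eq hp
        ((mulLeft_X_commute_pderiv (R := R) (Sum.inr_ne_inl (b := j) (a := j))).smul_right h)
      simp [polynomialOperator, hr, LinearMap.pow_mulLeft, X_pow, smul_pow,
        pderiv_toLinearMap_pow hp.ne_zero, natCast_eq_zero_of_charP R _ p]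

section Action

variable {A : Type*} [Ring A] [Algebra R A] {h : R} {z : ι ⊕ ι → A}
  (hgen : Algebra.adjoin R (Set.range z) = ⊤)
  {ρ : A →ₐ[R] Module.End R (TruncatedPolynomial (ι ⊕ ι) R p)}
  (hρ : ∀ k, ρ (z k) = polynomialOperator p h k)

include hgen hρ

theorem algHom_commute_mulLeft_X_inr (a : A) (j : ι) :
    Commute (ρ a) (LinearMap.mulLeft R (X (.inr j))) := by
  have mem_adjoin : a ∈ Algebra.adjoin R (Set.range z) := hgen ▸ Algebra.mem_top
  induction mem_adjoin using Algebra.adjoin_induction with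
  | mem a ha =>
    obtain ⟨k, rfl⟩ := ha
    exact hρ k ▸ polynomialOperator_commute_mulLeft_X_inr h k j
  | algebraMap r => exact ρ.commutes r ▸ Algebra.commute_algebraMap_left r _
  | add a b _ _ ha hb => exact map_add ρ a b ▸ ha.add_left hb
  | mul a b _ _ ha hb => exact map_mul ρ a b ▸ ha.mul_left hb

/- As `ρ a` commutes with multiplication by `Y_j` and `ρ y_j` sends `1` to `Y_j`, right
multiplication of `a` by `y_j` multiplies `ρ a 1` by `Y_j`. -/
theorem algHom_normalOrder_apply_one [DecidableEq ι] (hz : IsReesWeylFamily p h z)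
    (v : TruncatedPolynomial (ι ⊕ ι) R p) : ρ (hz.normalOrder v) 1 = v := by
  let S := LinearMap.eqLocus (LinearMap.applyₗ 1 ∘ₗ ρ.toLinearMap ∘ₗ hz.normalOrder) .id
  suffices S = ⊤ from LinearMap.congr_fun (LinearMap.eqLocus_eq_top.mp this) v
  refine submodule_eq_top_of_mul_mem adjoin_range_X S ?_ ?_
  · change ρ (hz.normalOrder 1) 1 = 1
    rw [hz.normalOrder_one, map_one ρ, Module.End.one_apply]
  · rintro _ ⟨i | j, rfl⟩ v hv
    all_goals
      change ρ (hz.normalOrder v) 1 = v at hv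
      change ρ (hz.normalOrder (X _ * v)) 1 = X _ * v
      rw [hz.normalOrder_X_mul]
    · simp [normalMul, hρ, polynomialOperator, hv]
    · have key := LinearMap.congr_fun
        (algHom_commute_mulLeft_X_inr hgen hρ (hz.normalOrder v) j).eq 1
      simpa [normalMul, hρ, polynomialOperator, hv] using key

theorem normalOrder_injective_of_algHom [DecidableEq ι] (hz : IsReesWeylFamily p h z) :
    Function.Injective hz.normalOrder :=
  Function.LeftInverse.injective (g := fun a => ρ a 1) (algHom_normalOrder_apply_one hgen hρ hz)

end Action

end PolynomialRepresentation

theorem derivation_of_A_h_inner_after_mul_h_general {p n : ℕ} (hp : p.Prime) {R : Type}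
    [CommRing R] [CharP R p] {h : R} (hh : IsSMulRegular R h)
    (D : ReesWeyl p n R h →ₗ[R] ReesWeyl p n R h)
    (hD : ∀ m m' : ReesWeyl p n R h, D (m * m') = D m * m' + m * D m') :
    ∃ a : ReesWeyl p n R h, ∀ m : ReesWeyl p n R h,
      algebraMap R (ReesWeyl p n R h) h * D m = a * m - m * a := by
  simp_rw [← Algebra.smul_def]
  exact ReesWeyl.isReesWeylFamily_gen.exists_smul_eq_commutator hp hh ReesWeyl.adjoin_range_gen
    (normalOrder_injective_of_algHom ReesWeyl.adjoin_range_gen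
      (ReesWeyl.lift_gen (isReesWeylFamily_polynomialOperator hp h)) _) hD

/-- every `𝔽_p[[h]]`-linear derivation of the Rees reduced Weyl algebra
`A_h = A(𝔽_p[[h]])` becomes inner after multiplication by `h`: there is an `a ∈ A_h`
with `h·D(m) = a·m − m·a` for all `m`. -/
theorem derivation_of_A_h_inner_after_mul_h
    (p n : ℕ) (hp : p.Prime) (hodd : p ≠ 2) (hn : 1 ≤ n)
    (D : ReesWeyl p n (PowerSeries (ZMod p)) PowerSeries.X →ₗ[PowerSeries (ZMod p)]
      ReesWeyl p n (PowerSeries (ZMod p)) PowerSeries.X)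
    (hD : ∀ m m' : ReesWeyl p n (PowerSeries (ZMod p)) PowerSeries.X,
      D (m * m') = D m * m' + m * D m') :
    ∃ a : ReesWeyl p n (PowerSeries (ZMod p)) PowerSeries.X,
      ∀ m : ReesWeyl p n (PowerSeries (ZMod p)) PowerSeries.X,
        algebraMap (PowerSeries (ZMod p)) (ReesWeyl p n (PowerSeries (ZMod p)) PowerSeries.X)
            PowerSeries.X * D m = a * m - m * a := by
  have : Fact p.Prime := ⟨hp⟩
  have : CharP (PowerSeries (ZMod p)) p :=
    charP_of_injective_algebraMap (algebraMap (ZMod p) _).injective p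
  exact derivation_of_A_h_inner_after_mul_h_general hp
    (IsRegular.of_ne_zero PowerSeries.X_ne_zero).left.isSMulRegular D hD
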